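/- Let (Ω, F, P) be a probability space, n_max ≥ 2 an integer, u > 0 a real, and N : Ω → ℕ a random variable with P(1 ≤ N ≤ n_max) = 1. Let m = E[N] (so m ≥ 1). If (1/m) · (1 − 1/m)^{m−1} > 1/n_max, then u/(2 n_max) < (1/2) · sup_{v ∈ [0,u]} ( v · E[ (1 − v/u)^{N−1} ] ). -/

import Mathlib

open MeasureTheory

/-- The function `k ↦ (1 - 1/m)^(k-1)` has a supporting line at `m`, also for `m = 1`, where it
is the indicator of `k = 1`. -/
lemma exists_supporting_line_pow {m : ℝ} (hm : 1 ≤ m) :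
    ∃ c : ℝ, ∀ k : ℕ, 1 ≤ k →
      (1 - 1 / m) ^ (m - 1) + c * (k - m) ≤ (1 - 1 / m) ^ (k - 1) := by
  rcases hm.eq_or_lt with rfl | hm
  · refine ⟨-1, fun k hk => ?_⟩
    rcases hk.eq_or_lt with rfl | hk
    · simp
    · have hk' : (2 : ℝ) ≤ k := by exact_mod_cast hk
      have h : (0 : ℝ) ≤ 0 ^ (k - 1) := pow_nonneg le_rfl _
      norm_num
      linarith
  · have hq : 0 < 1 - 1 / m := by
      rw [sub_pos, div_lt_one (by linarith)]
      exact hm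
    generalize 1 - 1 / m = q at hq
    refine ⟨q ^ (m - 1) * Real.log q, fun k hk => ?_⟩
    have hsplit : q ^ (k - 1) = q ^ (m - 1) * Real.exp (Real.log q * (k - m)) := by
      rw [← Real.rpow_def_of_pos hq, ← Real.rpow_add hq, ← Real.rpow_natCast, Nat.cast_sub hk]
      congr 1
      push_cast
      ring
    rw [hsplit]
    nlinarith [Real.add_one_le_exp (Real.log q * (k - m)), Real.rpow_pos_of_pos hq (m - 1)]

lemma integrable_pow_of_mem_Icc {Ω : Type*} [MeasurableSpace Ω] (P : Measure Ω)
    [IsFiniteMeasure P] {K : Ω → ℕ} (hK : Measurable K) {q : ℝ} (hq : q ∈ Set.Icc (0 : ℝ) 1) :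
    Integrable (fun ω => q ^ K ω) P := by
  refine Integrable.of_bound
    ((measurable_from_top (f := fun k : ℕ => q ^ k)).comp hK).aestronglyMeasurable
    1 (.of_forall fun ω => ?_)
  rw [Real.norm_of_nonneg (pow_nonneg hq.1 _)]
  exact pow_le_one₀ hq.1 hq.2

/-- **Proposition 2.**  Let `N` be the random number of active users, with `1 ≤ N ≤ n_max`
almost surely, and `m = E[N]`.  If `(1/m)(1 - 1/m)^(m-1) > 1/n_max`, then the average minimum
multiplexing gain per user of frequency division, `u/(2 n_max)`, is strictly smaller than that
of robust frequency hopping, `(1/2) sup_{v ∈ [0,u]} v · E[(1 - v/u)^(N-1)]`. -/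
theorem prop2_FD_lt_FH
    {Ω : Type*} [MeasurableSpace Ω] (P : Measure Ω) [IsProbabilityMeasure P]
    (nmax : ℕ) (hnmax : 2 ≤ nmax) (u : ℝ) (hu : 0 < u)
    (N : Ω → ℕ) (hNmeas : Measurable N)
    (hNbound : ∀ᵐ ω ∂P, 1 ≤ N ω ∧ N ω ≤ nmax)
    (m : ℝ) (hm : m = ∫ ω, (N ω : ℝ) ∂P)
    (hcond : (1 / m) * (1 - 1 / m) ^ (m - 1) > 1 / (nmax : ℝ)) :
    u / (2 * nmax) <
      (1 / 2) * sSup ((fun v : ℝ =>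
        v * ∫ ω, (1 - v / u) ^ (N ω - 1) ∂P) '' Set.Icc 0 u) := by
  have hNint : Integrable (fun ω => (N ω : ℝ)) P := by
    refine Integrable.of_bound
      (measurable_from_top.comp hNmeas).aestronglyMeasurable (nmax : ℝ) ?_
    filter_upwards [hNbound] with ω hω
    simpa using hω.2
  have hpow {q : ℝ} (hq : q ∈ Set.Icc (0 : ℝ) 1) : Integrable (fun ω => q ^ (N ω - 1)) P :=
    integrable_pow_of_mem_Icc P ((measurable_from_top (f := fun k : ℕ => k - 1)).comp hNmeas) hq
  have hm1 : 1 ≤ m := by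
    have h : ∫ _, (1 : ℝ) ∂P ≤ ∫ ω, (N ω : ℝ) ∂P := by
      refine integral_mono_ae (integrable_const _) hNint ?_
      filter_upwards [hNbound] with ω hω
      exact_mod_cast hω.1
    simpa [hm] using h
  have hm0 : 0 < m := by linarith
  have hinv : 1 / m ≤ 1 := (div_le_one hm0).2 hm1
  have hinv0 : 0 < 1 / m := by positivity
  have hjensen : (1 - 1 / m) ^ (m - 1) ≤ ∫ ω, (1 - 1 / m) ^ (N ω - 1) ∂P := by
    obtain ⟨c, hc⟩ := exists_supporting_line_pow hm1
    have hsub : Integrable (fun ω => c * ((N ω : ℝ) - m)) P :=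
      (hNint.sub (integrable_const m)).const_mul c
    calc (1 - 1 / m) ^ (m - 1)
        = ∫ ω, ((1 - 1 / m) ^ (m - 1) + c * (N ω - m)) ∂P := by
          rw [integral_add (integrable_const _) hsub, integral_const_mul,
            integral_sub hNint (integrable_const m), ← hm]
          simp
      _ ≤ _ := by
          refine integral_mono_ae ((integrable_const _).add hsub)
            (hpow ⟨by linarith, by linarith⟩) ?_
          filter_upwards [hNbound] with ω hω
          exact hc _ hω.1
  have hbdd : BddAbove ((fun v : ℝ =>
      v * ∫ ω, (1 - v / u) ^ (N ω - 1) ∂P) '' Set.Icc 0 u) := by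
    refine ⟨u, ?_⟩
    rintro _ ⟨v, ⟨hv0, hvu⟩, rfl⟩
    have hq0 : 0 ≤ 1 - v / u := sub_nonneg.2 ((div_le_one hu).2 hvu)
    have hq1 : 1 - v / u ≤ 1 := sub_le_self _ (div_nonneg hv0 hu.le)
    have h : ∫ ω, (1 - v / u) ^ (N ω - 1) ∂P ≤ ∫ _, (1 : ℝ) ∂P :=
      integral_mono (hpow ⟨hq0, hq1⟩) (integrable_const _) fun ω => pow_le_one₀ hq0 hq1
    rw [integral_const, probReal_univ, one_smul] at h
    exact (mul_le_of_le_one_right hv0 h).trans hvu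
  have hsup := le_csSup hbdd (Set.mem_image_of_mem _
    (show u / m ∈ Set.Icc 0 u from ⟨by positivity, div_le_self hu.le hm1⟩))
  have hdiv : u / m / u = 1 / m := by field_simp
  simp only [hdiv] at hsup
  calc u / (2 * nmax) = u / 2 * (1 / nmax) := by ring
    _ < u / 2 * (1 / m * (1 - 1 / m) ^ (m - 1)) := by gcongr
    _ ≤ u / 2 * (1 / m * ∫ ω, (1 - 1 / m) ^ (N ω - 1) ∂P) := by gcongr
    _ = 1 / 2 * (u / m * ∫ ω, (1 - 1 / m) ^ (N ω - 1) ∂P) := by ring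
    _ ≤ _ := by gcongr
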